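/- Let n ≥ 4, let 0 < Z ≤ 2^n and set a = ⌊log_2 Z⌋. Let s and c be integers with 2^n - 2^s < c < 2^n - 2^{s-1} and s > a. Then every 2^n-periodic binary sequence S with odd Hamming weight in one period and L_1(S) = c satisfies L_{1;Z}(S) ∈ {c} ∪ {2^n - 2^t : a ≤ t ≤ s - 1}. -/

import Mathlib

/-- Generating polynomial `S^N(x) = s_0 + s_1 x + ... + s_{N-1} x^{N-1}` of one period
of an `N`-periodic binary sequence. -/
noncomputable def genPoly {N : ℕ} (S : Fin N → ZMod 2) : Polynomial (ZMod 2) :=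
  ∑ i : Fin N, Polynomial.C (S i) * Polynomial.X ^ (i : ℕ)

/-- Linear complexity `L(S) = N - deg (gcd (1 - x^N, S^N(x)))`. -/
noncomputable def linComp {N : ℕ} (S : Fin N → ZMod 2) : ℕ :=
  N - (EuclideanDomain.gcd (1 - Polynomial.X ^ N) (genPoly S)).natDegree

/-- Hamming weight of one period of an `N`-periodic binary sequence. -/
def wt {N : ℕ} (T : Fin N → ZMod 2) : ℕ :=
  (Finset.univ.filter (fun i => T i ≠ 0)).card

/-- `k`-error linear complexity `L_{N,k}(S)`. -/
noncomputable def errLC {N : ℕ} (S : Fin N → ZMod 2) (k : ℕ) : ℕ :=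
  sInf {c | ∃ T : Fin N → ZMod 2, wt T ≤ k ∧ linComp (S + T) = c}

/-- `k`-error linear complexity with a zone of length `Z`: `L_{N,k;Z}(S)`. -/
noncomputable def errLCZone {N : ℕ} (S : Fin N → ZMod 2) (k Z : ℕ) : ℕ :=
  sInf {c | ∃ T : Fin N → ZMod 2, wt T ≤ k ∧ (∀ i : Fin N, Z ≤ (i : ℕ) → T i = 0) ∧
    linComp (S + T) = c}

/-- `E_1(j)`: the sequence whose only nonzero term in one period is a `1` at position `j`. -/
def E1 {N : ℕ} (j : Fin N) : Fin N → ZMod 2 :=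
  fun i => if i = j then 1 else 0

/-!
Over `𝔽₂` one has `1 - X ^ 2 ^ n = (X - 1) ^ 2 ^ n`, so `L(S) ≤ 2 ^ n - d` means that `(X - 1) ^ d`
divides the generating polynomial of `S`. An odd-weight `S` is not divisible by `X - 1`, hence an
optimal correction of weight at most one is a single error `X ^ j₀`, and with `M = 2 ^ n - L₁(S)`
the power `(X - 1) ^ M` divides `S + X ^ j₀`. For `d ≤ M`, an error at position `j` achieves
`2 ^ n - d` exactly when `(X - 1) ^ d ∣ X ^ j - X ^ j₀`. As `1` is a root of `X ^ e - 1` of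
multiplicity the largest power of `2` dividing `e`, this says `j ≡ j₀` modulo the least power of
`2` that is at least `d`. If the zone contains such a `j` for `d = M`, then `L_{1;Z}(S) = L₁(S)`;
otherwise `L_{1;Z}(S) = 2 ^ n - 2 ^ t` for the largest `t` such that the zone meets the class of
`j₀` modulo `2 ^ t`, and `t ≥ ⌊log₂ Z⌋` because the zone contains every residue modulo
`2 ^ ⌊log₂ Z⌋`.
-/

open Polynomial

section RootMultiplicity

variable {R : Type*} [CommRing R] [IsDomain R]

theorem rootMultiplicity_one_X_pow_sub_one_of_natCast_ne_zero {m : ℕ} (hm : (m : R) ≠ 0) :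
    (X ^ m - 1 : R[X]).rootMultiplicity 1 = 1 := by
  have hm0 : 0 < m := Nat.pos_of_ne_zero fun h ↦ hm (by simp [h])
  have hne : (X ^ m - 1 : R[X]) ≠ 0 := X_pow_sub_C_ne_zero hm0 1
  apply le_antisymm
  · rw [← not_lt, one_lt_rootMultiplicity_iff_isRoot hne]
    simp [derivative_X_pow, hm]
  · exact (rootMultiplicity_pos hne).2 (by simp)

variable (p : ℕ) [Fact p.Prime] [CharP R p]

theorem rootMultiplicity_one_X_pow_sub_one {e : ℕ} (he : e ≠ 0) :
    (X ^ e - 1 : R[X]).rootMultiplicity 1 = p ^ padicValNat p e := by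
  have hp : p.Prime := Fact.out
  have : ExpChar R p := ExpChar.prime hp
  obtain ⟨r, m, hm, rfl⟩ := Nat.exists_eq_pow_mul_and_not_dvd he p hp.ne_one
  have hexpand : (X ^ (p ^ r * m) - 1 : R[X]) = expand R (p ^ r) (X ^ m - 1) := by
    simp [pow_mul]
  have hm0 : m ≠ 0 := right_ne_zero_of_mul he
  have hcast : (m : R) ≠ 0 := mt (CharP.cast_eq_zero_iff R p m).1 hm
  rw [hexpand, rootMultiplicity_expand_pow, one_pow,
    rootMultiplicity_one_X_pow_sub_one_of_natCast_ne_zero hcast, mul_one,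
    padicValNat.mul (pow_ne_zero r hp.ne_zero) hm0, padicValNat.prime_pow,
    padicValNat.eq_zero_of_not_dvd hm, add_zero]

theorem X_sub_one_pow_dvd_X_pow_sub_one_iff {d e : ℕ} :
    (X - 1 : R[X]) ^ d ∣ X ^ e - 1 ↔ p ^ Nat.clog p d ∣ e := by
  have hp : p.Prime := Fact.out
  rcases eq_or_ne e 0 with rfl | he
  · simp
  have hne : (X ^ e - 1 : R[X]) ≠ 0 := X_pow_sub_C_ne_zero (Nat.pos_of_ne_zero he) 1
  rw [padicValNat_dvd_iff_le he, Nat.clog_le_iff_le_pow hp.one_lt,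
    ← rootMultiplicity_one_X_pow_sub_one (R := R) p he, le_rootMultiplicity_iff hne, map_one]

theorem X_sub_one_pow_dvd_X_pow_sub_X_pow_iff {d i j : ℕ} :
    (X - 1 : R[X]) ^ d ∣ X ^ i - X ^ j ↔ i ≡ j [MOD p ^ Nat.clog p d] := by
  wlog hij : i ≤ j generalizing i j
  · rw [dvd_sub_comm, this (le_of_not_ge hij), Nat.ModEq.comm]
  have hcoprime : IsCoprime ((X - 1 : R[X]) ^ d) (X ^ i) := IsCoprime.pow ⟨-1, 1, by ring⟩
  have hfactor : (X ^ j - X ^ i : R[X]) = X ^ i * (X ^ (j - i) - 1) := by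
    rw [mul_sub, ← pow_add, Nat.add_sub_cancel' hij, mul_one]
  calc (X - 1 : R[X]) ^ d ∣ X ^ i - X ^ j
    _ ↔ (X - 1 : R[X]) ^ d ∣ X ^ i * (X ^ (j - i) - 1) := by rw [dvd_sub_comm, hfactor]
    _ ↔ (X - 1 : R[X]) ^ d ∣ X ^ (j - i) - 1 :=
      ⟨hcoprime.dvd_of_dvd_mul_left, fun h ↦ h.mul_left _⟩
    _ ↔ i ≡ j [MOD p ^ Nat.clog p d] := by
      rw [X_sub_one_pow_dvd_X_pow_sub_one_iff p, Nat.modEq_iff_dvd' hij]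

end RootMultiplicity

section Sequences

variable {N k Z m : ℕ} {S : Fin N → ZMod 2}

theorem genPoly_add (S T : Fin N → ZMod 2) : genPoly (S + T) = genPoly S + genPoly T := by
  simp [genPoly, add_mul, Finset.sum_add_distrib]

theorem genPoly_E1 (j : Fin N) : genPoly (E1 j) = X ^ (j : ℕ) := by
  simp [genPoly, E1]

theorem eval_one_genPoly (S : Fin N → ZMod 2) : (genPoly S).eval 1 = wt S := by
  have hterm (x : ZMod 2) : x = if x ≠ 0 then 1 else 0 := by decide +revert
  simp only [genPoly, wt, eval_finsetSum, eval_mul, eval_C, eval_pow, eval_X, one_pow, mul_one,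
    Finset.natCast_card_filter]
  exact Finset.sum_congr rfl fun i _ ↦ hterm (S i)

theorem X_sub_one_dvd_genPoly_iff : X - 1 ∣ genPoly S ↔ Even (wt S) := by
  rw [← C_1, dvd_iff_isRoot, IsRoot.def, eval_one_genPoly, ZMod.natCast_eq_zero_iff_even]

theorem wt_le_one_iff {T : Fin N → ZMod 2} : wt T ≤ 1 ↔ T = 0 ∨ ∃ j, T = E1 j := by
  have hone {x : ZMod 2} : x ≠ 0 → x = 1 := by decide +revert
  constructor
  · intro hT
    refine or_iff_not_imp_left.2 fun hT0 ↦ ?_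
    obtain ⟨j, hj⟩ := Function.ne_iff.1 hT0
    refine ⟨j, funext fun i ↦ ?_⟩
    by_cases hi : T i = 0
    · have hij : i ≠ j := by rintro rfl; exact hj hi
      simp [E1, hi, hij]
    · have hij : i = j := Finset.card_le_one.1 hT i (by simpa using hi) j (by simpa using hj)
      simp [E1, hij, hone hj]
  · rintro (rfl | ⟨j, rfl⟩)
    · simp [wt]
    · simp [wt, E1, Finset.filter_eq']

theorem errLCZone_le_iff :
    errLCZone S k Z ≤ m ↔ ∃ T : Fin N → ZMod 2, wt T ≤ k ∧
      (∀ i : Fin N, Z ≤ (i : ℕ) → T i = 0) ∧ linComp (S + T) ≤ m := by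
  constructor
  · intro h
    have hne : {c | ∃ T : Fin N → ZMod 2, wt T ≤ k ∧
        (∀ i : Fin N, Z ≤ (i : ℕ) → T i = 0) ∧ linComp (S + T) = c}.Nonempty :=
      ⟨_, 0, by simp [wt], by simp, rfl⟩
    obtain ⟨T, hwt, hzone, hT⟩ := Nat.sInf_mem hne
    exact ⟨T, hwt, hzone, hT.trans_le h⟩
  · rintro ⟨T, hwt, hzone, hT⟩
    have hle : errLCZone S k Z ≤ linComp (S + T) := Nat.sInf_le ⟨T, hwt, hzone, rfl⟩
    exact hle.trans hT

theorem errLC_eq_errLCZone (S : Fin N → ZMod 2) (k : ℕ) : errLC S k = errLCZone S k N := by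
  simp [errLC, errLCZone, (Fin.isLt _).not_ge]

theorem errLC_le_errLCZone (S : Fin N → ZMod 2) (k Z : ℕ) : errLC S k ≤ errLCZone S k Z := by
  obtain ⟨T, hwt, -, hT⟩ := errLCZone_le_iff.1 (le_refl (errLCZone S k Z))
  rw [errLC_eq_errLCZone]
  exact errLCZone_le_iff.2 ⟨T, hwt, fun i hi ↦ absurd i.isLt hi.not_gt, hT⟩

/-- The zone `{0, …, Z - 1}`, cut off at the period `N`, meets the residue class of the
position `j₀` modulo `2 ^ t`. It measures how well an error inside the zone can imitate an
error at `j₀`. -/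
def ZoneMeetsClass (Z : ℕ) (j₀ : Fin N) (t : ℕ) : Prop :=
  ∃ j : Fin N, (j : ℕ) < Z ∧ (j : ℕ) ≡ j₀ [MOD 2 ^ t]

theorem ZoneMeetsClass.anti {t u : ℕ} {j₀ : Fin N} (hu : ZoneMeetsClass Z j₀ u)
    (htu : t ≤ u) : ZoneMeetsClass Z j₀ t := by
  obtain ⟨j, hj, hmod⟩ := hu
  exact ⟨j, hj, hmod.of_dvd (pow_dvd_pow 2 htu)⟩

theorem zoneMeetsClass_log (hZ : Z ≠ 0) (j₀ : Fin N) :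
    ZoneMeetsClass Z j₀ (Nat.log 2 Z) := by
  refine ⟨⟨j₀ % 2 ^ Nat.log 2 Z, (Nat.mod_le _ _).trans_lt j₀.isLt⟩, ?_, Nat.mod_modEq _ _⟩
  exact (Nat.mod_lt _ (by positivity)).trans_le (Nat.pow_log_le_self 2 hZ)

end Sequences

section TwoPowPeriod

variable {n Z d M : ℕ} {S : Fin (2 ^ n) → ZMod 2}

theorem one_sub_X_pow_two_pow (n : ℕ) : (1 - X ^ 2 ^ n : (ZMod 2)[X]) = (X - 1) ^ 2 ^ n := by
  rw [sub_pow_char_pow, one_pow, CharTwo.sub_eq_add, CharTwo.sub_eq_add, add_comm]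

theorem linComp_le_two_pow_sub_iff (hd : d ≤ 2 ^ n) :
    linComp S ≤ 2 ^ n - d ↔ (X - 1) ^ d ∣ genPoly S := by
  have hprime : Prime (X - 1 : (ZMod 2)[X]) := prime_X_sub_C 1
  rw [linComp, one_sub_X_pow_two_pow]
  set g := EuclideanDomain.gcd ((X - 1) ^ 2 ^ n) (genPoly S)
  obtain ⟨r, hr, hassoc⟩ : ∃ r ≤ 2 ^ n, Associated g ((X - 1) ^ r) :=
    (dvd_prime_pow hprime _).1 (EuclideanDomain.gcd_dvd_left _ _)
  have hdeg : g.natDegree = r := by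
    rw [natDegree_eq_of_degree_eq (degree_eq_degree_of_associated hassoc), natDegree_pow, ← C_1,
      natDegree_X_sub_C, mul_one]
  calc 2 ^ n - g.natDegree ≤ 2 ^ n - d
    _ ↔ d ≤ r := by omega
    _ ↔ (X - 1) ^ d ∣ g := by
      rw [hassoc.dvd_iff_dvd_right, pow_dvd_pow_iff hprime.ne_zero hprime.not_isUnit]
    _ ↔ (X - 1) ^ d ∣ genPoly S :=
      ⟨fun h ↦ h.trans (EuclideanDomain.gcd_dvd_right _ _),
        EuclideanDomain.dvd_gcd (pow_dvd_pow _ hd)⟩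

theorem errLCZone_one_le_two_pow_sub_iff (hodd : Odd (wt S)) (hd0 : d ≠ 0) (hd : d ≤ 2 ^ n) :
    errLCZone S 1 Z ≤ 2 ^ n - d ↔
      ∃ j : Fin (2 ^ n), (j : ℕ) < Z ∧ (X - 1) ^ d ∣ genPoly S + X ^ (j : ℕ) := by
  simp only [errLCZone_le_iff, linComp_le_two_pow_sub_iff hd, genPoly_add]
  constructor
  · rintro ⟨T, hwt, hzone, hdvd⟩
    rcases wt_le_one_iff.1 hwt with rfl | ⟨j, rfl⟩
    · have heven : X - 1 ∣ genPoly S :=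
        (dvd_pow_self _ hd0).trans (by simpa [genPoly] using hdvd)
      exact absurd (X_sub_one_dvd_genPoly_iff.1 heven) (Nat.not_even_iff_odd.2 hodd)
    · have hj : (j : ℕ) < Z := by
        by_contra! hZj
        simpa [E1] using hzone j hZj
      exact ⟨j, hj, genPoly_E1 j ▸ hdvd⟩
  · rintro ⟨j, hj, hdvd⟩
    refine ⟨E1 j, wt_le_one_iff.2 (.inr ⟨j, rfl⟩), fun i hi ↦ if_neg ?_, genPoly_E1 j ▸ hdvd⟩
    rintro rfl
    exact hj.not_ge hi

theorem errLC_one_lt_two_pow (hodd : Odd (wt S)) : errLC S 1 < 2 ^ n := by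
  have hpos : 0 < 2 ^ n := by positivity
  have hdvd : (X - 1) ^ 1 ∣ genPoly S + X ^ 0 := by
    rw [pow_one, pow_zero, ← C_1, dvd_iff_isRoot, IsRoot.def, eval_add, eval_one_genPoly, eval_C,
      ZMod.natCast_eq_one_iff_odd.2 hodd, CharTwo.add_self_eq_zero]
  have hle : errLC S 1 ≤ 2 ^ n - 1 := by
    rw [errLC_eq_errLCZone, errLCZone_one_le_two_pow_sub_iff hodd one_ne_zero hpos]
    exact ⟨⟨0, hpos⟩, hpos, hdvd⟩
  omega

theorem X_sub_one_pow_dvd_add_X_pow_iff {f : (ZMod 2)[X]} {i j : ℕ}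
    (hi : (X - 1) ^ M ∣ f + X ^ i) (hd : d ≤ M) :
    (X - 1) ^ d ∣ f + X ^ j ↔ j ≡ i [MOD 2 ^ Nat.clog 2 d] := by
  have hdiff : f + X ^ j = f + X ^ i + (X ^ j - X ^ i) := by ring
  rw [hdiff, dvd_add_right ((pow_dvd_pow _ hd).trans hi),
    X_sub_one_pow_dvd_X_pow_sub_X_pow_iff 2]

theorem exists_errLCZone_one_le_iff_zoneMeetsClass (hodd : Odd (wt S)) :
    ∃ j₀ : Fin (2 ^ n), ∀ Z d, d ≠ 0 → d ≤ 2 ^ n - errLC S 1 →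
      (errLCZone S 1 Z ≤ 2 ^ n - d ↔ ZoneMeetsClass Z j₀ (Nat.clog 2 d)) := by
  have hlt := errLC_one_lt_two_pow hodd
  have hopt : errLCZone S 1 (2 ^ n) ≤ 2 ^ n - (2 ^ n - errLC S 1) := by
    rw [← errLC_eq_errLCZone]
    omega
  obtain ⟨j₀, -, hj₀⟩ :=
    (errLCZone_one_le_two_pow_sub_iff hodd (by omega) (Nat.sub_le _ _)).1 hopt
  refine ⟨j₀, fun Z d hd0 hd ↦ ?_⟩
  simp only [errLCZone_one_le_two_pow_sub_iff hodd hd0 (hd.trans (Nat.sub_le _ _)),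
    X_sub_one_pow_dvd_add_X_pow_iff hj₀ hd, ZoneMeetsClass]

end TwoPowPeriod

theorem stmt9_general (n Z : ℕ) (hZ : Z ≠ 0) (S : Fin (2 ^ n) → ZMod 2) (hodd : Odd (wt S)) :
    errLCZone S 1 Z = errLC S 1 ∨
      ∃ t, Nat.log 2 Z ≤ t ∧ 2 ^ t < 2 ^ n - errLC S 1 ∧ errLCZone S 1 Z = 2 ^ n - 2 ^ t := by
  have hlt := errLC_one_lt_two_pow hodd
  have hge := errLC_le_errLCZone S 1 Z
  obtain ⟨j₀, hj₀⟩ := exists_errLCZone_one_le_iff_zoneMeetsClass hodd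
  have hlog := zoneMeetsClass_log hZ j₀
  by_cases hfull : ZoneMeetsClass Z j₀ (Nat.clog 2 (2 ^ n - errLC S 1))
  · have hle := (hj₀ Z _ (by omega) le_rfl).2 hfull
    exact .inl (by omega)
  obtain ⟨t, ht, hsucc⟩ : ∃ t, ¬¬ZoneMeetsClass Z j₀ t ∧ ¬ZoneMeetsClass Z j₀ (t + 1) :=
    Nat.exists_not_and_succ_of_not_zero_of_exists (not_not.2 (hlog.anti (Nat.zero_le _)))
      ⟨_, hfull⟩
  rw [not_not] at ht
  have hlogt : Nat.log 2 Z ≤ t := by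
    by_contra! h
    exact hsucc (hlog.anti h)
  have htM : 2 ^ t < 2 ^ n - errLC S 1 := by
    rw [← Nat.lt_clog_iff_pow_lt one_lt_two]
    by_contra! h
    exact hfull (ht.anti h)
  have hclog : t + 1 ≤ Nat.clog 2 (2 ^ t + 1) :=
    (Nat.lt_clog_iff_pow_lt one_lt_two).2 (Nat.lt_succ_self _)
  have hupper : errLCZone S 1 Z ≤ 2 ^ n - 2 ^ t :=
    (hj₀ Z _ (by positivity) htM.le).2 (by rwa [Nat.clog_pow 2 t one_lt_two])
  have hlower : ¬errLCZone S 1 Z ≤ 2 ^ n - (2 ^ t + 1) :=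
    fun h ↦ hsucc (((hj₀ Z _ (Nat.succ_ne_zero _) htM).1 h).anti hclog)
  exact .inr ⟨t, hlogt, htM, by omega⟩

/-- Case `s > a`: for every odd-weight sequence with `L_1(S) = c`, the value
`L_{1;Z}(S)` lies in `{c} ∪ {2^n - 2^t : a ≤ t ≤ s-1}`. -/
theorem stmt9 (n Z s c : ℕ) (hn : 4 ≤ n) (hZ0 : 0 < Z) (hZ : Z ≤ 2^n)
    (h1 : 2^n - 2^s < c) (h2 : c < 2^n - 2^(s-1)) (hsa : Nat.log 2 Z < s)
    (S : Fin (2^n) → ZMod 2) (hodd : Odd (wt S)) (hc : errLC S 1 = c) :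
    errLCZone S 1 Z = c ∨
      ∃ t, Nat.log 2 Z ≤ t ∧ t ≤ s - 1 ∧ errLCZone S 1 Z = 2^n - 2^t := by
  subst hc
  refine (stmt9_general n Z hZ0.ne' S hodd).imp_right fun ⟨t, hat, htM, ht⟩ ↦ ⟨t, hat, ?_, ht⟩
  exact Nat.le_sub_one_of_lt ((Nat.pow_lt_pow_iff_right one_lt_two).1
    (htM.trans_le (tsub_le_iff_tsub_le.1 h1.le)))
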